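/- For every n ∈ ℕ with n ≥ 1, the minimal number of monochromatic generalized Schur triples of the form (x, y, x + 3y) that can be attained under any 2-coloring of [n] of the block form R^s B^{t−s} R^{n−t} is M⁽³⁾(n) = ⌊(n² − 18n + 101)/108⌋ + c(n), where c(n) = 1 if n ≡ 36 (mod 54), c(n) = −1 if n ≡ 30 (mod 54) or n ≡ 42 (mod 54), and c(n) = 0 otherwise. -/

import Mathlib

/-- The number `M⁽ᵏ⁾(n,s,t)` of monochromatic generalized Schur triples
`(x, y, x + ky)` in `[n]³` under the block coloring `R^s B^(t-s) R^(n-t)`: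
pairs `(x,y) ∈ [n]²` such that `z = x + ky ≤ n` and `x, y, z` are all red
(`≤ s` or `> t`) or all blue (in `(s,t]`). -/
def genCount (k n s t : ℕ) : ℕ :=
  ((Finset.Icc 1 n ×ˢ Finset.Icc 1 n).filter
    (fun p => p.1 + k * p.2 ≤ n ∧
      (((p.1 ≤ s ∨ t < p.1) ∧ (p.2 ≤ s ∨ t < p.2) ∧
        (p.1 + k * p.2 ≤ s ∨ t < p.1 + k * p.2)) ∨
       ((s < p.1 ∧ p.1 ≤ t) ∧ (s < p.2 ∧ p.2 ≤ t) ∧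
        (s < p.1 + k * p.2 ∧ p.1 + k * p.2 ≤ t))))).card

/-- The correction term for `a = 3`: `1` if `n ≡ 36 (mod 54)`, `−1` if
`n ≡ 30` or `n ≡ 42 (mod 54)`, and `0` otherwise. -/
def corr3 (n : ℕ) : ℤ :=
  if n % 54 = 36 then 1 else if n % 54 = 30 ∨ n % 54 = 42 then -1 else 0


def fF (n : ℤ) : ℤ := (n ^ 2 - 18 * n + 101) / 108 +
  (if n % 54 = 36 then 1 else if n % 54 = 30 ∨ n % 54 = 42 then -1 else 0)

def Tz (m : ℤ) : ℤ := (m - 1) * (m - 2) / 6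

lemma Tz_tangent (m p : ℤ) : p * (2 * m - 3 * p - 3) ≤ 2 * Tz m := by
  have h0 : 0 ≤ (m - 3 * p - 1) * (m - 3 * p - 2) := by
    rcases le_or_gt (m - 3 * p) 1 with h | h
    · nlinarith
    · exact mul_nonneg (by omega) (by omega)
  have h1 : 3 * (p * (2 * m - 3 * p - 3)) ≤ (m - 1) * (m - 2) := by nlinarith
  have h2 : ∃ w, p * (2 * m - 3 * p - 3) = 2 * w := by
    have : Even (p * (2 * m - 3 * p - 3)) := by
      rcases Int.even_or_odd' p with ⟨c, h | h⟩ <;> subst h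
      · exact ⟨c * (2 * m - 3 * (2 * c) - 3), by ring⟩
      · exact ⟨(2 * c + 1) * (m - 3 * c - 3), by ring⟩
    obtain ⟨w, hw⟩ := this
    exact ⟨w, by rw [hw]; ring⟩
  obtain ⟨w, hw⟩ := h2
  unfold Tz
  rw [hw] at h1 ⊢
  generalize (m - 1) * (m - 2) = X at *
  omega

lemma Tz_nonneg (m : ℤ) : 0 ≤ Tz m := by
  have := Tz_tangent m 0
  simp at this
  exact this

lemma Tz_quad (m : ℤ) : m ^ 2 - 3 * m ≤ 6 * Tz m := by
  have h : m ^ 2 - 3 * m = (m - 1) * (m - 2) - 2 := by ring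
  have h3 : (m - 1) * (m - 2) % 6 ≤ 2 := by
    have : m % 6 = 0 ∨ m % 6 = 1 ∨ m % 6 = 2 ∨ m % 6 = 3 ∨ m % 6 = 4 ∨ m % 6 = 5 := by omega
    rcases this with h | h | h | h | h | h <;> simp [Int.mul_emod, Int.sub_emod, h]
  unfold Tz
  rw [h]
  generalize (m - 1) * (m - 2) = X at *
  omega

lemma Tz_shift (k i : ℤ) : Tz (12 * k + i) = Tz i + (24 * k ^ 2 + 4 * k * i - 6 * k) := by
  unfold Tz
  rw [show (12 * k + i - 1) * (12 * k + i - 2) = (i - 1) * (i - 2) + 6 * (24 * k ^ 2 + 4 * k * i - 6 * k) by ring]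
  rw [Int.add_mul_ediv_left _ _ (by norm_num)]

lemma Tz_shift3 (k i : ℤ) : 2 * Tz (3 * k + i) = 2 * Tz i + k * (3 * k + 2 * i - 3) := by
  obtain ⟨w, hw⟩ : ∃ w, k * (3 * k + 2 * i - 3) = 2 * w := by
    rcases Int.even_or_odd' k with ⟨c, h | h⟩ <;> subst h
    · exact ⟨c * (3 * (2 * c) + 2 * i - 3), by ring⟩
    · exact ⟨(2 * c + 1) * (3 * c + i), by ring⟩
  unfold Tz
  rw [show (3 * k + i - 1) * (3 * k + i - 2) = (i - 1) * (i - 2) + 3 * (k * (3 * k + 2 * i - 3)) by ring, hw]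
  rw [show (i - 1) * (i - 2) + 3 * (2 * w) = (i - 1) * (i - 2) + 6 * w by ring]
  rw [Int.add_mul_ediv_left _ _ (by norm_num)]
  ring

lemma fF_shift (k r : ℤ) : fF (54 * k + r) = fF r + (27 * k ^ 2 + k * r - 9 * k) := by
  unfold fF
  rw [show (54 * k + r) ^ 2 - 18 * (54 * k + r) + 101 = (r ^ 2 - 18 * r + 101) + 108 * (27 * k ^ 2 + k * r - 9 * k) by ring]
  rw [Int.add_mul_ediv_left _ _ (by norm_num)]
  rw [show (54 * k + r) % 54 = r % 54 by omega]
  ring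

lemma finite_check : ∀ r ∈ Finset.range 54, ∀ i' ∈ Finset.range 24,
    fF (r : ℤ) ≤ Tz ((i' : ℤ) - 10) +
      (((r : ℤ) - 4 * ((i' : ℤ) - 10)) / 6) * (((r : ℤ) - 4 * ((i' : ℤ) - 10)) - 3 * (((r : ℤ) - 4 * ((i' : ℤ) - 10)) / 6) - 3) := by
  decide +kernel

lemma fF_small : ∀ r ∈ Finset.range 54, fF (r : ℤ) ≤ 18 := by
  decide +kernel

lemma key0 (r i : ℤ) (h0 : 0 ≤ r) (h1 : r < 54) :
    fF r ≤ Tz i + ((r - 4 * i) / 6) * ((r - 4 * i) - 3 * ((r - 4 * i) / 6) - 3) := by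
  obtain ⟨r', rfl⟩ := Int.eq_ofNat_of_zero_le h0
  by_cases hi : -10 ≤ i ∧ i < 14
  · obtain ⟨i', hi'⟩ := Int.eq_ofNat_of_zero_le (show 0 ≤ i + 10 by omega)
    have := finite_check r' (by simp; omega) i' (by simp; omega)
    rw [show i = (i' : ℤ) - 10 by omega]
    exact this
  · have hf := fF_small r' (by simp; omega)
    have hq := Tz_quad i
    generalize hm : (r' : ℤ) - 4 * i = m
    obtain ⟨q, e, hqe, he0, he1, hq'⟩ : ∃ q e : ℤ, m = 6 * q + e ∧ 0 ≤ e ∧ e < 6 ∧ m / 6 = q :=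
      ⟨m / 6, m % 6, by omega, by omega, by omega, rfl⟩
    rw [hq', hqe]
    have h2 : 12 * (q * (6 * q + e - 3 * q - 3)) ≥ m ^ 2 - 6 * m := by
      rw [hqe]; nlinarith [mul_nonneg he0 (show 0 ≤ 6 - e by omega)]
    have h3 : m ^ 2 - 6 * m ≥ -9 := by nlinarith [sq_nonneg (m - 3)]
    have h4 : i ^ 2 - 3 * i ≥ 130 := by
      rcases le_or_gt i 0 with h | h
      · have : i ≤ -11 := by omega
        nlinarith
      · have : 14 ≤ i := by omega
        nlinarith
    linarith

lemma key (a b c : ℤ) : fF (4 * a + b + c) ≤ Tz a + Tz b + Tz c := by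
  obtain ⟨k, r, hn, h0, h1⟩ : ∃ k r : ℤ, 4 * a + b + c = 54 * k + r ∧ 0 ≤ r ∧ r < 54 :=
    ⟨(4 * a + b + c) / 54, (4 * a + b + c) % 54, by omega, by omega, by omega⟩
  obtain ⟨i, rfl⟩ : ∃ i, a = 12 * k + i := ⟨a - 12 * k, by ring⟩
  have h := key0 r i h0 h1
  generalize (r - 4 * i) / 6 = q at h
  have hb := Tz_tangent b (k + q)
  have hc := Tz_tangent c (k + q)
  rw [hn, fF_shift, Tz_shift]
  obtain rfl : c = 54 * k + r - 4 * (12 * k + i) - b := by linarith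
  nlinarith

lemma fF_le (n : ℤ) : 108 * fF n ≤ n ^ 2 - 18 * n + 209 := by
  unfold fF
  split_ifs <;> omega

lemma fF_le_small (n : ℤ) (h0 : 0 ≤ n) (h : n < 36) : 108 * fF n ≤ n ^ 2 - 18 * n + 101 := by
  unfold fF
  split_ifs <;> omega

lemma fF_18 (n : ℤ) (h0 : 1 ≤ n) (h : n ≤ 18) : fF n ≤ 0 := by
  have := fF_le_small n (by omega) (by omega)
  have : 108 * fF n < 108 := by nlinarith
  omega

lemma fnum (n b : ℤ) (h0 : 1 ≤ n) (h : n < 4 * b) : fF n ≤ Tz b := by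
  rcases le_or_gt n 18 with h18 | h18
  · exact (fF_18 n h0 h18).trans (Tz_nonneg b)
  rcases le_or_gt n 27 with h27 | h27
  · have h1 := fF_le_small n (by omega) (by omega)
    have h2 := Tz_tangent b 1
    interval_cases n <;> omega
  · have h1 := fF_le n
    have h2 := Tz_quad b
    nlinarith

lemma num4 (n s t C D E : ℤ) (hs : 1 ≤ s) (hst : s ≤ t) (hb : 3 * s + 4 ≤ n - t)
    (hC : 2 * s * (n - t) - 3 * s * (s + 1) ≤ 2 * C) (hD0 : 0 ≤ D) (hE0 : 0 ≤ E)
    (hD : 4 * s ≤ t → (t - 4 * s) ^ 2 - 3 * (t - 4 * s) ≤ 6 * D)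
    (hE : 4 * t ≤ n → (n - 4 * t) ^ 2 - 3 * (n - 4 * t) ≤ 6 * E) : fF n ≤ C + D + E := by
  rcases le_or_gt n 18 with h18 | h18
  · have := fF_18 n (by omega) h18
    nlinarith
  have hf := fF_le n
  rcases le_or_gt (4 * s) t with h1 | h1
  · have hD := hD h1
    rcases le_or_gt (4 * t) n with h2 | h2
    · have hE := hE h2
      have : 0 ≤ (n - 4 * t) * (s - 1) := mul_nonneg (by omega) (by omega)
      have : 0 ≤ n * (s - 1) := mul_nonneg (by omega) (by omega)
      have := sq_nonneg (17 * t - 4 * n)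
      nlinarith
    · have hp : 0 ≤ (n - t - 3 * s - 4) * (4 * t - 1 - n) := mul_nonneg (by omega) (by omega)
      have hfin : 0 ≤ n * (105 * s - 5 * t + 15) + 126 * s ^ 2 - 240 * s * t + 22 * t ^ 2
          + 51 * s - 39 * t - 213 := by
        rcases le_or_gt 0 (105 * s - 5 * t + 15) with h3 | h3
        · have := mul_nonneg (show 0 ≤ n - t - 3 * s - 4 by omega) h3
          nlinarith [sq_nonneg (34 * t - 150 * s - 44)]
        · have := mul_nonneg (show 0 ≤ 4 * t - 1 - n by omega) (show 0 ≤ -(105 * s - 5 * t + 15) by omega)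
          nlinarith
      nlinarith
  · rcases le_or_gt (4 * t) n with h2 | h2
    · have hE := hE h2
      nlinarith [mul_nonneg (show 0 ≤ n - 4 * t by omega) (show 0 ≤ s - 1 by omega)]
    · nlinarith

def Tri (m : ℕ) : Finset (ℕ × ℕ) :=
  (Finset.Icc 1 m ×ˢ Finset.Icc 1 m).filter (fun p => p.1 + 3 * p.2 ≤ m)

lemma mem_Tri (m x y : ℕ) : (x, y) ∈ Tri m ↔ 1 ≤ x ∧ 1 ≤ y ∧ x + 3 * y ≤ m := by
  simp only [Tri, Finset.mem_filter, Finset.mem_product, Finset.mem_Icc]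
  omega

lemma Tri_card_succ (m : ℕ) : (Tri (m + 1)).card = (Tri m).card + m / 3 := by
  have h : Tri (m + 1) = Tri m ∪ (Finset.Icc 1 (m / 3)).image (fun y => (m + 1 - 3 * y, y)) := by
    ext ⟨x, y⟩
    simp only [Finset.mem_union, mem_Tri, Finset.mem_image, Finset.mem_Icc, Prod.mk.injEq]
    constructor
    · intro h
      by_cases h' : x + 3 * y ≤ m
      · left; omega
      · right; exact ⟨y, by omega, by omega, rfl⟩
    · rintro (h | ⟨y', h1, h2, rfl⟩) <;> omega
  rw [h, Finset.card_union_of_disjoint, Finset.card_image_of_injective]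
  · simp
  · intro a b hab
    simp only [Prod.mk.injEq] at hab
    exact hab.2
  · rw [Finset.disjoint_left]
    rintro ⟨x, y⟩ h1 h2
    simp only [mem_Tri, Finset.mem_image, Finset.mem_Icc, Prod.mk.injEq] at h1 h2
    obtain ⟨y', h3, h4, rfl⟩ := h2
    omega

lemma Tri_card (m : ℕ) : ((Tri m).card : ℤ) = Tz m := by
  induction m with
  | zero => decide
  | succ m ih =>
    rw [Tri_card_succ]
    push_cast
    rw [ih]
    unfold Tz
    have h : ((m : ℤ) + 1 - 1) * ((m : ℤ) + 1 - 2) = ((m : ℤ) - 1) * ((m : ℤ) - 2) + 2 * (m - 1) := by ring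
    rw [h]
    obtain ⟨q, e, hq, he0, he1⟩ : ∃ q e : ℤ, (m : ℤ) = 3 * q + e ∧ 0 ≤ e ∧ e < 3 :=
      ⟨(m : ℤ) / 3, (m : ℤ) % 3, by omega, by omega, by omega⟩
    obtain ⟨w, hw⟩ : ∃ w, q * (q - 1) = 2 * w := by
      obtain ⟨w, hw⟩ := Int.even_mul_pred_self q
      exact ⟨w, by omega⟩
    have h1 : ((m : ℤ) - 1) * ((m : ℤ) - 2) = 18 * w + 6 * (q * e) + (e - 1) * (e - 2) := by
      rw [hq]; linear_combination 9 * hw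
    rw [h1]
    generalize q * e = z
    have : e = 0 ∨ e = 1 ∨ e = 2 := by omega
    rcases this with rfl | rfl | rfl <;> omega

lemma Trap_card (b s : ℕ) (h : 3 * s ≤ b) :
    2 * (((Tri b).filter (fun p => p.2 ≤ s)).card : ℤ) = 2 * s * b - 3 * s * (s + 1) := by
  induction s with
  | zero =>
    have : (Tri b).filter (fun p => p.2 ≤ 0) = ∅ := by
      ext ⟨x, y⟩
      simp only [Finset.mem_filter, mem_Tri]
      simp
      omega
    rw [this]; simp
  | succ s ih =>
    have ih := ih (by omega)
    have h' : (Tri b).filter (fun p => p.2 ≤ s + 1) = (Tri b).filter (fun p => p.2 ≤ s) ∪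
        (Finset.Icc 1 (b - 3 * (s + 1))).image (fun x => (x, s + 1)) := by
      ext ⟨x, y⟩
      simp only [Finset.mem_union, Finset.mem_filter, mem_Tri, Finset.mem_image, Finset.mem_Icc, Prod.mk.injEq]
      constructor
      · intro h
        by_cases h' : y ≤ s
        · left; omega
        · right; exact ⟨x, by omega, rfl, by omega⟩
      · rintro (h | ⟨y', h1, rfl, rfl⟩) <;> omega
    rw [h', Finset.card_union_of_disjoint, Finset.card_image_of_injective]
    · simp only [Nat.card_Icc, Nat.add_sub_cancel]
      push_cast [h]
      linarith
    · intro a b hab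
      simp only [Prod.mk.injEq] at hab
      exact hab.1
    · rw [Finset.disjoint_left]
      rintro ⟨x, y⟩ h1 h2
      simp only [Finset.mem_filter, mem_Tri, Finset.mem_image, Finset.mem_Icc, Prod.mk.injEq] at h1 h2
      obtain ⟨y', h3, h4, rfl⟩ := h2
      omega

def FF (n s t : ℕ) : Finset (ℕ × ℕ) :=
  ((Finset.Icc 1 n ×ˢ Finset.Icc 1 n).filter
    (fun p => p.1 + 3 * p.2 ≤ n ∧
      (((p.1 ≤ s ∨ t < p.1) ∧ (p.2 ≤ s ∨ t < p.2) ∧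
        (p.1 + 3 * p.2 ≤ s ∨ t < p.1 + 3 * p.2)) ∨
       ((s < p.1 ∧ p.1 ≤ t) ∧ (s < p.2 ∧ p.2 ≤ t) ∧
        (s < p.1 + 3 * p.2 ∧ p.1 + 3 * p.2 ≤ t)))))

lemma genCount_eq (n s t : ℕ) : genCount 3 n s t = (FF n s t).card := rfl

lemma mem_FF (n s t x y : ℕ) : (x, y) ∈ FF n s t ↔ 1 ≤ x ∧ 1 ≤ y ∧ (x + 3 * y ≤ n ∧
      (((x ≤ s ∨ t < x) ∧ (y ≤ s ∨ t < y) ∧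
        (x + 3 * y ≤ s ∨ t < x + 3 * y)) ∨
       ((s < x ∧ x ≤ t) ∧ (s < y ∧ y ≤ t) ∧
        (s < x + 3 * y ∧ x + 3 * y ≤ t)))) := by
  simp only [FF, Finset.mem_filter, Finset.mem_product, Finset.mem_Icc]
  constructor
  · rintro ⟨h1, h2⟩
    exact ⟨h1.1.1, h1.2.1, h2⟩
  · rintro ⟨h1, h2, h3⟩
    exact ⟨⟨⟨h1, by omega⟩, h2, by omega⟩, h3⟩

lemma three_le (F : Finset (ℕ × ℕ)) (P Q R : ℕ × ℕ → Prop)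
    [DecidablePred P] [DecidablePred Q] [DecidablePred R]
    (h1 : ∀ p, P p → ¬ Q p) (h2 : ∀ p, P p → ¬ R p) (h3 : ∀ p, Q p → ¬ R p) :
    (F.filter P).card + (F.filter Q).card + (F.filter R).card ≤ F.card := by
  rw [← Finset.card_union_of_disjoint, ← Finset.card_union_of_disjoint]
  · apply Finset.card_le_card
    intro p hp
    simp only [Finset.mem_union, Finset.mem_filter] at hp
    tauto
  · rw [Finset.disjoint_left]
    intro p hp
    simp only [Finset.mem_union, Finset.mem_filter] at hp ⊢
    rcases hp with hp | hp
    · exact fun h => h2 p hp.2 h.2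
    · exact fun h => h3 p hp.2 h.2
  · rw [Finset.disjoint_left]
    intro p hp
    simp only [Finset.mem_filter] at hp ⊢
    exact fun h => h1 p hp.2 h.2

lemma le_three (F : Finset (ℕ × ℕ)) (P Q R : ℕ × ℕ → Prop)
    [DecidablePred P] [DecidablePred Q] [DecidablePred R]
    (h : ∀ p ∈ F, P p ∨ Q p ∨ R p) :
    F.card ≤ (F.filter P).card + (F.filter Q).card + (F.filter R).card := by
  refine le_trans (Finset.card_le_card (t := (F.filter P ∪ F.filter Q) ∪ F.filter R) ?_) ?_
  · intro p hp
    simp only [Finset.mem_union, Finset.mem_filter]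
    have := h p hp
    tauto
  · refine (Finset.card_union_le _ _).trans ?_
    have := Finset.card_union_le (F.filter P) (F.filter Q)
    omega

/-- all red, `z ≤ s` -/
abbrev PA (s : ℕ) (p : ℕ × ℕ) : Prop := p.1 + 3 * p.2 ≤ s
/-- `x > t`, `y ≤ s` -/
abbrev PC (s t : ℕ) (p : ℕ × ℕ) : Prop := t < p.1 ∧ p.2 ≤ s
/-- blue -/
abbrev PD (s t : ℕ) (p : ℕ × ℕ) : Prop := s < p.1 ∧ p.1 ≤ t
/-- `x ≤ s`, `z > t` -/
abbrev PB (s t : ℕ) (p : ℕ × ℕ) : Prop := p.1 ≤ s ∧ t < p.1 + 3 * p.2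
/-- `x > t`, `y > t` -/
abbrev PE (t : ℕ) (p : ℕ × ℕ) : Prop := t < p.1 ∧ t < p.2

lemma shiftinj (u v : ℕ) (S : Set (ℕ × ℕ)) :
    Set.InjOn (fun p : ℕ × ℕ => (p.1 + u, p.2 + v)) S := by
  rintro ⟨a, b⟩ _ ⟨c, d⟩ _ h
  simp only [Prod.mk.injEq] at h ⊢
  omega

lemma cardA (n s t : ℕ) (hst : s ≤ t) (htn : t ≤ n) :
    (Tri s).card ≤ ((FF n s t).filter (PA s)).card := by
  apply Finset.card_le_card
  rintro ⟨x, y⟩ h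
  simp only [Finset.mem_filter, mem_FF, mem_Tri, PA] at h ⊢
  omega

lemma cardC' (n s t : ℕ) (hst : s ≤ t) (htn : t ≤ n) :
    ((Tri (n - t)).filter (fun p => p.2 ≤ s)).card ≤ ((FF n s t).filter (PC s t)).card := by
  apply Finset.card_le_card_of_injOn (fun p => (p.1 + t, p.2 + 0)) _ (shiftinj _ _ _)
  rintro ⟨x, y⟩ h
  simp only [Finset.coe_filter, Finset.mem_filter, Set.mem_ofPred_eq, mem_FF, mem_Tri, PC] at h ⊢
  omega

lemma cardC (n s t : ℕ) (hst : s ≤ t) (htn : t ≤ n) (hb : n - t ≤ 3 * s + 3) :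
    (Tri (n - t)).card ≤ ((FF n s t).filter (PC s t)).card := by
  refine le_trans (Finset.card_le_card ?_) (cardC' n s t hst htn)
  rintro ⟨x, y⟩ h
  simp only [Finset.mem_filter, mem_Tri] at h ⊢
  omega

lemma cardD (n s t : ℕ) (htn : t ≤ n) :
    (Tri (t - 4 * s)).card ≤ ((FF n s t).filter (PD s t)).card := by
  apply Finset.card_le_card_of_injOn (fun p => (p.1 + s, p.2 + s)) _ (shiftinj _ _ _)
  rintro ⟨x, y⟩ h
  simp only [Finset.coe_filter, Finset.mem_coe, Set.mem_ofPred_eq, mem_FF, mem_Tri, PD] at h ⊢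
  omega

lemma cardE (n s t : ℕ) (hst : s ≤ t) :
    (Tri (n - 4 * t)).card ≤ ((FF n s t).filter (PE t)).card := by
  apply Finset.card_le_card_of_injOn (fun p => (p.1 + t, p.2 + t)) _ (shiftinj _ _ _)
  rintro ⟨x, y⟩ h
  simp only [Finset.coe_filter, Finset.mem_coe, Set.mem_ofPred_eq, mem_FF, mem_Tri, PE] at h ⊢
  omega

lemma cardB (n s t : ℕ) (hst : s ≤ t) (h3 : 3 * s ≤ t) (h4 : 4 * s ≤ n) (h : t < 4 * s) :
    (Tri (4 * s - t + 3)).card ≤ ((FF n s t).filter (PB s t)).card := by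
  apply Finset.card_le_card_of_injOn (fun p => (s + 1 - p.1, s + 1 - p.2))
  · rintro ⟨x, y⟩ h
    simp only [Finset.coe_filter, Finset.mem_coe, Set.mem_ofPred_eq, mem_FF, mem_Tri, PB] at h ⊢
    omega
  · rintro ⟨a, b⟩ h1 ⟨c, d⟩ h2 h
    simp only [Finset.mem_coe, mem_Tri, Prod.mk.injEq] at h h1 h2 ⊢
    omega

lemma lower (n s t : ℕ) (hn : 1 ≤ n) (hs : 1 ≤ s) (hst : s ≤ t) (htn : t ≤ n) :
    fF n ≤ (genCount 3 n s t : ℤ) := by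
  rw [genCount_eq]
  have tA := Tri_card s
  have tC := Tri_card (n - t)
  have cA := cardA n s t hst htn
  have cC' := cardC' n s t hst htn
  have cD := cardD n s t htn
  have cE := cardE n s t hst
  have leA := Finset.card_filter_le (FF n s t) (PA s)
  have leC := Finset.card_filter_le (FF n s t) (PC s t)
  rcases le_or_gt (n - t) (3 * s + 3) with hb | hb
  · have cC := cardC n s t hst htn hb
    by_cases h4 : n < 4 * s
    · have := fnum n s (by omega) (by omega)
      omega
    by_cases h3 : t < 3 * s
    · have := fnum n (n - t : ℕ) (by omega) (by omega)
      omega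
    have hk := key s (n - t : ℕ) (t - 4 * s : ℤ)
    rw [show (4 * (s : ℤ) + (n - t : ℕ) + (t - 4 * s : ℤ)) = n by push_cast [htn]; ring] at hk
    rcases le_or_gt (4 * s) t with h | h
    · have tD := Tri_card (t - 4 * s)
      rw [show ((t - 4 * s : ℕ) : ℤ) = (t : ℤ) - 4 * s by omega] at tD
      have := three_le (FF n s t) (PA s) (PC s t) (PD s t)
        (by rintro ⟨x, y⟩; simp only [PA, PC]; omega)
        (by rintro ⟨x, y⟩; simp only [PA, PD]; omega)
        (by rintro ⟨x, y⟩; simp only [PC, PD]; omega)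
      omega
    · have tB := Tri_card (4 * s - t + 3)
      have cB := cardB n s t hst (by omega) (by omega) h
      have e : Tz ((4 * s - t + 3 : ℕ) : ℤ) = Tz (t - 4 * s : ℤ) := by
        have : ((4 * s - t + 3 : ℕ) : ℤ) = 3 - (t - 4 * s : ℤ) := by omega
        rw [this]
        unfold Tz
        congr 1
        ring
      have := three_le (FF n s t) (PA s) (PC s t) (PB s t)
        (by rintro ⟨x, y⟩; simp only [PA, PC]; omega)
        (by rintro ⟨x, y⟩; simp only [PA, PB]; omega)
        (by rintro ⟨x, y⟩; simp only [PC, PB]; omega)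
      omega
  · have hT := Trap_card (n - t) s (by omega)
    have hq1 := Tz_quad ((t - 4 * s : ℕ) : ℤ)
    have hq2 := Tz_quad ((n - 4 * t : ℕ) : ℤ)
    rw [← Tri_card] at hq1 hq2
    have := num4 n s t _ _ _ (by omega) (by omega) (by omega)
      (by rw [hT]; push_cast [htn]; exact le_refl _)
      (Nat.cast_nonneg (Tri (t - 4 * s)).card) (Nat.cast_nonneg (Tri (n - 4 * t)).card)
      (fun h => by
        rw [show ((t - 4 * s : ℕ) : ℤ) = (t : ℤ) - 4 * s by omega] at hq1; exact hq1)
      (fun h => by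
        rw [show ((n - 4 * t : ℕ) : ℤ) = (n : ℤ) - 4 * t by omega] at hq2; exact hq2)
    have := three_le (FF n s t) (PC s t) (PD s t) (PE t)
        (by rintro ⟨x, y⟩; simp only [PC, PD]; omega)
        (by rintro ⟨x, y⟩; simp only [PC, PE]; omega)
        (by rintro ⟨x, y⟩; simp only [PD, PE]; omega)
    omega

lemma shiftinj' (u v : ℕ) (S : Set (ℕ × ℕ)) (h : ∀ p ∈ S, u ≤ p.1 ∧ v ≤ p.2) :
    Set.InjOn (fun p : ℕ × ℕ => (p.1 - u, p.2 - v)) S := by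
  rintro ⟨a, b⟩ h1 ⟨c, d⟩ h2 h'
  have h1 := h _ h1
  have h2 := h _ h2
  simp only [Prod.mk.injEq] at h' h1 h2 ⊢
  omega

lemma upper (n s t : ℕ) (h4 : 4 * s ≤ t) (htn : t ≤ n) (h3 : n ≤ 3 * t) :
    (genCount 3 n s t : ℤ) ≤ Tz s + Tz (n - t : ℕ) + Tz (t - 4 * s : ℕ) := by
  rw [genCount_eq, ← Tri_card, ← Tri_card, ← Tri_card]
  have h := le_three (FF n s t) (PA s) (PC s t) (PD s t) (by
    rintro ⟨x, y⟩ h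
    simp only [mem_FF, PA, PC, PD] at h ⊢
    omega)
  have hA : ((FF n s t).filter (PA s)).card ≤ (Tri s).card := by
    apply Finset.card_le_card
    rintro ⟨x, y⟩ h
    simp only [Finset.mem_filter, mem_FF, mem_Tri, PA] at h ⊢
    omega
  have hC : ((FF n s t).filter (PC s t)).card ≤ (Tri (n - t)).card := by
    apply Finset.card_le_card_of_injOn (fun p => (p.1 - t, p.2 - 0))
    · rintro ⟨x, y⟩ h
      simp only [Finset.coe_filter, Finset.mem_coe, Set.mem_ofPred_eq, mem_FF, mem_Tri, PC] at h ⊢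
      omega
    · apply shiftinj'
      rintro ⟨x, y⟩ h
      simp only [Finset.coe_filter, Set.mem_ofPred_eq, mem_FF, PC] at h ⊢
      omega
  have hD : ((FF n s t).filter (PD s t)).card ≤ (Tri (t - 4 * s)).card := by
    apply Finset.card_le_card_of_injOn (fun p => (p.1 - s, p.2 - s))
    · rintro ⟨x, y⟩ h
      simp only [Finset.coe_filter, Finset.mem_coe, Set.mem_ofPred_eq, mem_FF, mem_Tri, PD] at h ⊢
      omega
    · apply shiftinj'
      rintro ⟨x, y⟩ h
      simp only [Finset.coe_filter, Set.mem_ofPred_eq, mem_FF, PD] at h ⊢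
      omega
  omega

lemma exists_check : ∀ r ∈ Finset.range 54, ∃ i ∈ Finset.range 20, ∃ j ∈ Finset.range 8,
    1 ≤ i ∧ 4 * i + j ≤ r + 7 ∧
      Tz (i : ℤ) + Tz (j : ℤ) + Tz ((r : ℤ) + 7 - 4 * i - j) ≤ fF ((r : ℤ) + 7) := by
  decide +kernel

lemma fF_eq (n : ℕ) : fF n = ((n : ℤ) ^ 2 - 18 * n + 101) / 108 + corr3 n := by
  unfold fF corr3
  congr 1
  split_ifs <;> omega

lemma small_check : ∀ n ∈ Finset.range 7, 1 ≤ n → ∃ s ∈ Finset.range 8, ∃ t ∈ Finset.range 8,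
    1 ≤ s ∧ s ≤ t ∧ t ≤ n ∧ (genCount 3 n s t : ℤ) ≤ fF n := by
  decide +kernel

lemma attained (n : ℕ) (hn : 1 ≤ n) : ∃ s t : ℕ, 1 ≤ s ∧ s ≤ t ∧ t ≤ n ∧
    (genCount 3 n s t : ℤ) ≤ fF n := by
  rcases lt_or_ge n 7 with h | h
  · obtain ⟨s, -, t, -, h⟩ := small_check n (by simpa using h) hn
    exact ⟨s, t, h⟩
  · obtain ⟨k, r, rfl, hr⟩ : ∃ k r, n = 54 * k + (r + 7) ∧ r < 54 :=
      ⟨(n - 7) / 54, (n - 7) % 54, by omega, by omega⟩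
    obtain ⟨i, hi, j, hj, hi1, hij, hT⟩ := exists_check r (by simpa using hr)
    simp only [Finset.mem_range] at hi hj
    refine ⟨12 * k + i, 51 * k + (r + 7) - j, by omega, by omega, by omega, ?_⟩
    have hu := upper (54 * k + (r + 7)) (12 * k + i) (51 * k + (r + 7) - j)
      (by omega) (by omega) (by omega)
    refine hu.trans ?_
    rw [show ((54 * k + (r + 7) - (51 * k + (r + 7) - j) : ℕ) : ℤ) = 3 * (k : ℤ) + j by omega,
      show ((51 * k + (r + 7) - j - 4 * (12 * k + i) : ℕ) : ℤ) = 3 * (k : ℤ) + ((r : ℤ) + 7 - 4 * i - j) by omega]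
    push_cast
    rw [Tz_shift, fF_shift]
    have e1 := Tz_shift3 k j
    have e2 := Tz_shift3 k ((r : ℤ) + 7 - 4 * i - j)
    nlinarith

/-- For every `n ≥ 1`, the minimum over all block colorings `R^s B^(t-s) R^(n-t)`
(`1 ≤ s ≤ t ≤ n`) of the number of monochromatic triples `(x, y, x+3y)` equals
`⌊(n² − 18n + 101)/108⌋ + c(n)`. -/
theorem min_genCount_three (n : ℕ) (hn : 1 ≤ n) :
    (∀ s t : ℕ, 1 ≤ s → s ≤ t → t ≤ n →
      ((n : ℤ) ^ 2 - 18 * n + 101) / 108 + corr3 n ≤ (genCount 3 n s t : ℤ)) ∧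
    (∃ s t : ℕ, 1 ≤ s ∧ s ≤ t ∧ t ≤ n ∧
      (genCount 3 n s t : ℤ) = ((n : ℤ) ^ 2 - 18 * n + 101) / 108 + corr3 n) := by
  rw [← fF_eq]
  refine ⟨fun s t h1 h2 h3 => lower n s t hn h1 h2 h3, ?_⟩
  obtain ⟨s, t, h1, h2, h3, h4⟩ := attained n hn
  exact ⟨s, t, h1, h2, h3, le_antisymm h4 (lower n s t hn h1 h2 h3)⟩
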